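/- Let M, A ∈ ℕ with M ≥ 1, let f be an (M,A)-quasi-isometry from a connected graph G to a connected graph H, let W ⊆ V(H) be connected, and for every w ∈ W let u_w ∈ V(G) be a vertex with d_H(f(u_w), w) ≤ A. Then B_G(U, M(3A+1)) is connected, where U := {u_w : w ∈ W}. -/

import Mathlib

open SimpleGraph

namespace CGT

/-- Distance between two vertex sets, as an extended natural number. -/
noncomputable def sDist {V : Type*} (G : SimpleGraph V) (U U' : Set V) : ℕ∞ :=
  ⨅ (u : U) (v : U'), G.edist u.1 v.1

/-- The ball of radius `r` around a vertex set `U`. -/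
def gBall {V : Type*} (G : SimpleGraph V) (U : Set V) (r : ℕ) : Set V :=
  {v | ∃ u ∈ U, G.edist u v ≤ (r : ℕ∞)}

/-- A set of vertices is connected if the induced subgraph is connected. -/
def SetConn {V : Type*} (G : SimpleGraph V) (U : Set V) : Prop :=
  (G.induce U).Connected

/-- The vertex set of a walk. -/
def walkSupp {V : Type*} {G : SimpleGraph V} {a b : V} (p : G.Walk a b) : Set V :=
  {v | v ∈ p.support}

/-- `X` separates `Y` and `Z` in `G`: every path with one end in `Y` and one in `Z`
contains a vertex of `X`. -/
def Separates {V : Type*} (G : SimpleGraph V) (X Y Z : Set V) : Prop :=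
  ∀ ⦃y z : V⦄, y ∈ Y → z ∈ Z → ∀ p : G.Walk y z, p.IsPath → ∃ x ∈ X, x ∈ p.support

/-- `f` is an `(M,A)`-quasi-isometry from `G` to `H`.  The two-sided distance bound
`M⁻¹ d_G(u,v) - A ≤ d_H(f u, f v) ≤ M d_G(u,v) + A` is stated multiplied out over `ℕ∞`. -/
structure IsQI {V V' : Type*} (M A : ℕ) (G : SimpleGraph V) (H : SimpleGraph V')
    (f : V → V') : Prop where
  upper : ∀ u v : V, H.edist (f u) (f v) ≤ (M : ℕ∞) * G.edist u v + (A : ℕ∞)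
  lower : ∀ u v : V, G.edist u v ≤ (M : ℕ∞) * H.edist (f u) (f v) + (M : ℕ∞) * (A : ℕ∞)
  dense : ∀ w : V', ∃ v : V, H.edist w (f v) ≤ (A : ℕ∞)

/-- `G` is `(M,A)`-quasi-isometric to `H`. -/
def QIsometric {V V' : Type*} (M A : ℕ) (G : SimpleGraph V) (H : SimpleGraph V') : Prop :=
  ∃ f : V → V', IsQI M A G H f

/-- `X` is a minor of `G`. -/
def HasMinor {V W : Type*} (G : SimpleGraph V) (X : SimpleGraph W) : Prop :=
  ∃ U : W → Set V,
    (∀ x, (U x).Nonempty) ∧ (∀ x, SetConn G (U x)) ∧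
    (∀ ⦃x y⦄, x ≠ y → Disjoint (U x) (U y)) ∧
    ∀ ⦃x y⦄, X.Adj x y → ∃ u ∈ U x, ∃ v ∈ U y, G.Adj u v

/-- The `(a × b)`-grid graph. -/
def gridGraph (a b : ℕ) : SimpleGraph (Fin a × Fin b) :=
  SimpleGraph.fromRel (fun u v =>
    (u.1 = v.1 ∧ u.2.1 + 1 = v.2.1) ∨ (u.2 = v.2 ∧ u.1.1 + 1 = v.1.1))

/-- A `K`-fat model of `X` in `G`: disjoint connected branch sets joined by internally
disjoint branch paths, all pairwise at distance at least `K` except for a branch path and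
the branch sets of its endpoints. -/
structure FatModel {V W : Type*} (G : SimpleGraph V) (X : SimpleGraph W) (K : ℕ) where
  branch : W → Set V
  branch_nonempty : ∀ x, (branch x).Nonempty
  branch_connected : ∀ x, SetConn G (branch x)
  branch_disjoint : ∀ ⦃x y⦄, x ≠ y → Disjoint (branch x) (branch y)
  pathEnd : ∀ ⦃x y⦄, X.Adj x y → V
  path : ∀ ⦃x y⦄ (e : X.Adj x y), G.Walk (pathEnd e) (pathEnd e.symm)
  path_isPath : ∀ ⦃x y⦄ (e : X.Adj x y), (path e).IsPath
  path_symm : ∀ ⦃x y⦄ (e : X.Adj x y), path e.symm = (path e).reverse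
  pathEnd_mem : ∀ ⦃x y⦄ (e : X.Adj x y), pathEnd e ∈ branch x
  path_meets : ∀ ⦃x y⦄ (e : X.Adj x y) (z : W) (v : V), v ∈ (path e).support → v ∈ branch z →
    (z = x ∧ v = pathEnd e) ∨ (z = y ∧ v = pathEnd e.symm)
  path_int_disjoint : ∀ ⦃x y x' y'⦄ (e : X.Adj x y) (e' : X.Adj x' y'), s(x, y) ≠ s(x', y') →
    ∀ v, v ∈ (path e).support → v ∈ (path e').support → v = pathEnd e' ∨ v = pathEnd e'.symm
  fat_branch : ∀ ⦃x y⦄, x ≠ y → (K : ℕ∞) ≤ sDist G (branch x) (branch y)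
  fat_path_branch : ∀ ⦃x y⦄ (e : X.Adj x y) (z : W), z ≠ x → z ≠ y →
    (K : ℕ∞) ≤ sDist G (walkSupp (path e)) (branch z)
  fat_paths : ∀ ⦃x y x' y'⦄ (e : X.Adj x y) (e' : X.Adj x' y'), s(x, y) ≠ s(x', y') →
    (K : ℕ∞) ≤ sDist G (walkSupp (path e)) (walkSupp (path e'))

/-- `X` is a `K`-fat minor of `G`. -/
def IsFatMinor {V W : Type*} (G : SimpleGraph V) (X : SimpleGraph W) (K : ℕ) : Prop :=
  Nonempty (FatModel G X K)

/-- `W` is a `K`-fat `n`-path-connected set in `G`. -/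
def FatPathConn {V : Type*} (G : SimpleGraph V) (K n : ℕ) (W : Set V) : Prop :=
  (∃ S : Finset V, ↑S ⊆ W ∧ 2 * n ≤ S.card) ∧
  (∀ ⦃u v : V⦄, u ∈ W → v ∈ W → u ≠ v → (K : ℕ∞) ≤ G.edist u v) ∧
  ∀ l : ℕ, l ≤ n → ∀ A B : Finset V, ↑A ⊆ W → ↑B ⊆ W → A.card = l → B.card = l →
    ∃ (a b : Fin l → V) (P : ∀ i : Fin l, G.Walk (a i) (b i)),
      (∀ i, (P i).IsPath) ∧ (∀ i, a i ∈ A ∧ b i ∈ B) ∧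
      ∀ i j, i ≠ j → (K : ℕ∞) ≤ sDist G (walkSupp (P i)) (walkSupp (P j))

end CGT

namespace Ghdm

/-- Raw vertex codes for the graphs `G_{h,d,m}`:
`path k` is the `k`-th vertex of the base path; `tree j i p` is the vertex at position `p`
of the `i`-th binary tree at level `j` (the root being position `[]`); and
`spine j i k t e s` is the `s`-th internal vertex of the spine from the `k`-th leaf of that
tree to the `e`-th element of the `t`-th local gluing set at level `j-1`. -/
inductive Raw : Type where
  | path (k : ℕ)
  | tree (j i : ℕ) (p : List Bool)
  | spine (j i k t e s : ℕ)
deriving DecidableEq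

/-- `N = 2^{h+1} - 1`, the number of copies of `G_{h,d,m-1}` glued inside `G_{h,d,m}`. -/
def NN (h : ℕ) : ℕ := 2 ^ (h + 1) - 1

/-- Canonical representative of a raw vertex code: all tree roots are identified with the
single root `tree m 1 []`, and the leftmost leaf of tree `i > 1` is identified with the
rightmost leaf of tree `i - 1` (consecutive copies are glued along these leaves). -/
def canon (h m : ℕ) : Raw → Raw
  | .tree j i p =>
    if p = [] then .tree m 1 []
    else if p = List.replicate h false ∧ 1 < i then .tree j (i - 1) (List.replicate h true)
    else .tree j i p
  | x => x

/-- The `q`-bit binary representation of `i` (most significant bit first);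
`false` means "left". -/
def natToBits (q i : ℕ) : List Bool := (List.range q).map fun a => Nat.testBit i (q - 1 - a)

/-- Position of the `k`-th leaf (1-based, from the left) in a binary tree of height `h`. -/
def leafPos (h k : ℕ) : List Bool := natToBits h (k - 1)

/-- The `e`-th element of the `g`-th gluing set `V^{jv}_g` (at level `jv`):
its element `e = 1` is an anchor of the base path, and its element `e ≥ 2` is a shared
extreme leaf of the trees at level `e`. -/
def VsetElem (h d jv g e : ℕ) : Raw :=
  if e = 1 then .path ((g - 1) * NN h ^ (jv - 1) * (d + 1))
  else if (g - 1) * NN h ^ (jv - e) = 0 then .tree e 1 (List.replicate h false)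
  else .tree e ((g - 1) * NN h ^ (jv - e)) (List.replicate h true)

/-- Valid (canonical) vertex codes of `G_{h,d,m}`. -/
def Valid (h d m : ℕ) : Raw → Prop
  | .path k => k ≤ (d + 1) * NN h ^ (m - 1)
  | .tree j i p => 2 ≤ j ∧ j ≤ m ∧ 1 ≤ i ∧ i ≤ NN h ^ (m - j) ∧ p.length ≤ h ∧
      (p = [] → j = m ∧ i = 1) ∧ (p = List.replicate h false → p ≠ [] → i = 1)
  | .spine j i k t e s => 2 ≤ j ∧ j ≤ m ∧ 1 ≤ i ∧ i ≤ NN h ^ (m - j) ∧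
      1 ≤ k ∧ k ≤ 2 ^ h ∧ (t = 2 * k - 2 ∨ t = 2 * k + 1) ∧ 1 ≤ t ∧ t ≤ 2 ^ (h + 1) ∧
      1 ≤ e ∧ e ≤ j - 1 ∧ 1 ≤ s ∧ s ≤ d

/-- Generating adjacencies between raw vertex codes: consecutive base path vertices,
parent/child in the binary trees, consecutive spine vertices, a spine and the leaf it
starts at, a spine and the gluing-set vertex it ends at (the latter collapsed to a single
edge when `d = 0`). -/
inductive rawAdj (h d : ℕ) : Raw → Raw → Prop
  | base (k : ℕ) : rawAdj h d (.path k) (.path (k + 1))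
  | child (j i : ℕ) (p : List Bool) (b : Bool) : p.length < h →
      rawAdj h d (.tree j i p) (.tree j i (p ++ [b]))
  | step (j i k t e s : ℕ) : rawAdj h d (.spine j i k t e s) (.spine j i k t e (s + 1))
  | toLeaf (j i k t e : ℕ) : rawAdj h d (.tree j i (leafPos h k)) (.spine j i k t e 1)
  | toV (j i k t e : ℕ) :
      rawAdj h d (.spine j i k t e d) (VsetElem h d (j - 1) ((i - 1) * NN h + t) e)
  | short (j i k t e : ℕ) : d = 0 → 1 ≤ k → k ≤ 2 ^ h → (t = 2 * k - 2 ∨ t = 2 * k + 1) →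
      1 ≤ t → t ≤ 2 ^ (h + 1) → 1 ≤ e → e ≤ j - 1 →
      rawAdj h d (.tree j i (leafPos h k)) (VsetElem h d (j - 1) ((i - 1) * NN h + t) e)

/-- Adjacency of canonical representatives. -/
def rel (h d m : ℕ) (x y : Raw) : Prop :=
  ∃ a b, rawAdj h d a b ∧ x = canon h m a ∧ y = canon h m b

/-- The vertex set of `G_{h,d,m}`. -/
def Verts (h d m : ℕ) : Set Raw := {x | Valid h d m x}

/-- The graph `G_{h,d,m}`. -/
def G (h d m : ℕ) : SimpleGraph (Verts h d m) :=
  (SimpleGraph.fromRel (rel h d m)).induce (Verts h d m)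

/-- Lift a set of raw codes to a set of vertices of `G_{h,d,m}`. -/
def lift {h d m : ℕ} (S : Set Raw) : Set (Verts h d m) := Subtype.val ⁻¹' S

/-- The root `R(G_{h,d,m})`. -/
def RootR (m : ℕ) : Raw := .tree m 1 []

/-- The gluing set `V^{jv}_g` of `G_{h,d,m}`, as a set of raw codes. -/
def VsetRaw (h d m jv g : ℕ) : Set Raw :=
  {x | ∃ e, 1 ≤ e ∧ e ≤ jv ∧ x = canon h m (VsetElem h d jv g e)}

/-- The set `S(G_{h,d,m})`. -/
def SsetR (h d m : ℕ) : Set Raw :=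
  VsetRaw h d m (m - 1) 1 ∪ {canon h m (.tree m 1 (leafPos h 1))}

/-- The set `T(G_{h,d,m})`. -/
def TsetR (h d m : ℕ) : Set Raw :=
  VsetRaw h d m (m - 1) (2 ^ (h + 1)) ∪ {canon h m (.tree m 1 (leafPos h (2 ^ h)))}

/-- For a vertex of the top binary tree at position `p`, the (1-based) index of the
leftmost leaf of the top tree below it. -/
def kOf (h : ℕ) (p : List Bool) : ℕ :=
  (p.foldl (fun a b => 2 * a + if b then 1 else 0) 0) * 2 ^ (h - p.length) + 1

/-- `S(Δ(x))` for the vertex `x` of the top binary tree `B(G_{h,d,m})` at position `p`. -/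
def SDeltaR (h d m : ℕ) (p : List Bool) : Set Raw :=
  VsetRaw h d m (m - 1) (2 * kOf h p - 1) ∪ {canon h m (.tree m 1 (leafPos h (kOf h p)))}

/-- The leaf of `B(G_{h,d,m})` immediately to the left of the leftmost leaf below the
top-tree vertex at position `p`; it is the unique leaf joined by spines to `S(Δ(x))`. -/
def leafLeftR (h m : ℕ) (p : List Bool) : Raw :=
  canon h m (.tree m 1 (leafPos h (kOf h p - 1)))

end Ghdm

/-!
For an edge `ww'` of `H[W]`, the images `f (u w)` and `f (u w')` are at distance at most
`A + 1 + A`, so the lower distance bound for `f` gives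
`d_G(u w, u w') ≤ M(2A + 1) + MA = M(3A + 1)`. A shortest path from `u w` to `u w'` therefore
stays in the ball of radius `M(3A + 1)` around `u w`, and following the edges of `H[W]` joins any
two elements of `U = u '' W` inside its fattening.
-/

namespace CGT

section Ball

variable {V : Type*} {G : SimpleGraph V} {U : Set V} {r : ℕ}

theorem subset_gBall : U ⊆ gBall G U r := fun x hx => ⟨x, hx, by simp⟩

theorem support_subset_gBall {a b : V} (p : G.Walk a b) (ha : a ∈ U) (hp : p.length ≤ r) :
    ∀ x ∈ p.support, x ∈ gBall G U r := by
  classical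
  intro x hx
  refine ⟨a, ha, (edist_le (p.takeUntil x hx)).trans ?_⟩
  exact_mod_cast (p.length_takeUntil_le_length hx).trans hp

theorem reachable_induce_gBall {a b : V} (ha : a ∈ U) (hab : G.edist a b ≤ r) :
    (G.induce (gBall G U r)).Reachable ⟨a, subset_gBall ha⟩ ⟨b, a, ha, hab⟩ := by
  have hfinite : G.edist a b ≠ ⊤ := ne_top_of_le_ne_top (ENat.natCast_ne_top r) hab
  obtain ⟨p, hp⟩ := exists_walk_of_edist_ne_top hfinite
  have hlength : p.length ≤ r := by rwa [← hp, Nat.cast_le] at hab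
  exact ⟨p.induce _ (support_subset_gBall p ha hlength)⟩

theorem setConn_gBall_of_reachable (hU : U.Nonempty)
    (h : ∀ a b (ha : a ∈ U) (hb : b ∈ U), (G.induce (gBall G U r)).Reachable
      ⟨a, subset_gBall ha⟩ ⟨b, subset_gBall hb⟩) :
    SetConn G (gBall G U r) := by
  have : Nonempty (gBall G U r) := (hU.mono subset_gBall).to_subtype
  refine ⟨?_⟩
  rintro ⟨x, a, ha, hax⟩ ⟨y, b, hb, hby⟩
  exact (reachable_induce_gBall ha hax).symm.trans
    ((h a b ha hb).trans (reachable_induce_gBall hb hby))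

theorem setConn_gBall_range {ι : Type*} {K : SimpleGraph ι} (hK : K.Connected) {u : ι → V}
    (hu : ∀ i j, K.Adj i j → G.edist (u i) (u j) ≤ r) :
    SetConn G (gBall G (Set.range u) r) := by
  have := hK.nonempty
  refine setConn_gBall_of_reachable (Set.range_nonempty u) ?_
  rintro _ _ ⟨i, rfl⟩ ⟨j, rfl⟩
  obtain ⟨p⟩ := hK.preconnected i j
  induction p with
  | nil => rfl
  | cons hadj _ ih => exact (reachable_induce_gBall (Set.mem_range_self _) (hu _ _ hadj)).trans ih

end Ball

theorem edist_le_of_adj_of_edist_le {V : Type*} {H : SimpleGraph V} {x y w w' : V} {A : ℕ∞}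
    (hw : H.edist x w ≤ A) (hadj : H.Adj w w') (hw' : H.edist y w' ≤ A) :
    H.edist x y ≤ 2 * A + 1 :=
  calc
    H.edist x y ≤ H.edist x w + H.edist w y := SimpleGraph.edist_triangle
    _ ≤ H.edist x w + (H.edist w w' + H.edist w' y) := by gcongr; exact SimpleGraph.edist_triangle
    _ ≤ A + (1 + A) := by
      gcongr
      · exact (edist_eq_one_iff_adj.2 hadj).le
      · rwa [SimpleGraph.edist_comm]
    _ = 2 * A + 1 := by ring

end CGT

theorem statement2_general {V V' : Type*} (M A : ℕ) (G : SimpleGraph V) (H : SimpleGraph V')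
    (f : V → V')
    (hf : ∀ x y, G.edist x y ≤ (M : ℕ∞) * H.edist (f x) (f y) + (M : ℕ∞) * (A : ℕ∞))
    (W : Set V') (hW : CGT.SetConn H W)
    (u : V' → V) (hu : ∀ w ∈ W, H.edist (f (u w)) w ≤ (A : ℕ∞)) :
    CGT.SetConn G (CGT.gBall G (u '' W) (M * (3 * A + 1))) := by
  rw [Set.image_eq_range]
  refine CGT.setConn_gBall_range hW fun w w' hadj => ?_
  have himage : H.edist (f (u w)) (f (u w')) ≤ 2 * A + 1 :=
    CGT.edist_le_of_adj_of_edist_le (hu w w.2) hadj (hu w' w'.2)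
  calc
    G.edist (u w) (u w') ≤ M * H.edist (f (u w)) (f (u w')) + M * A := hf _ _
    _ ≤ M * (2 * A + 1) + M * A := by gcongr
    _ = (M * (3 * A + 1) : ℕ) := by push_cast; ring

/-- quasi-isometric preimages of connected sets, fattened by `M(3A+1)`,
are connected. -/
theorem statement2 {V V' : Type*} (M A : ℕ) (hM : 1 ≤ M)
    (G : SimpleGraph V) (H : SimpleGraph V') (hG : G.Connected) (hH : H.Connected)
    (f : V → V') (hf : CGT.IsQI M A G H f)
    (W : Set V') (hW : CGT.SetConn H W)
    (u : V' → V) (hu : ∀ w ∈ W, H.edist (f (u w)) w ≤ (A : ℕ∞)) :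
    CGT.SetConn G (CGT.gBall G (u '' W) (M * (3 * A + 1))) :=
  statement2_general M A G H f hf.lower W hW u hu
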